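/- arXiv:2603.28485 — 2 statements merged into one kernel-verified Lean document; each statement's English description precedes it below -/
import Mathlib

section
/- Let m ≥ 4 and let e be an odd positive integer with gcd(e, 2^m − 1) = 1 and 4e ≤ 2^{m/4} − 1 (an inequality of real numbers). Define f̃ : F_{2^m} × F_{2^m} → F_2 by f̃(x,y) = Tr_1^m(y · (x⁻¹)^e). Then every M-subspace of f̃ of F_2-dimension at least 2 is contained in {0} × F_{2^m}; in particular, {0} × F_{2^m} is the unique M-subspace of f̃ of dimension m. -/
/-- The second-order derivative `D_u D_v f (x) = f x + f (x+u) + f (x+v) + f (x+u+v)`. -/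
def D2 {V : Type*} [AddCommGroup V] (f : V → ZMod 2) (u v x : V) : ZMod 2 :=
  f x + f (x + u) + f (x + v) + f (x + u + v)

/-- An `M`-subspace of `f` : a subspace on which all second-order derivatives of `f` vanish. -/
def IsMSubspace {V : Type*} [AddCommGroup V] [Module (ZMod 2) V] (f : V → ZMod 2)
    (U : Submodule (ZMod 2) V) : Prop :=
  ∀ a ∈ U, ∀ b ∈ U, ∀ x, D2 f a b x = 0

/-- The absolute trace map of `F_{2^m}`. -/
noncomputable def Tr (m : ℕ) (x : GaloisField 2 m) : ZMod 2 :=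
  Algebra.trace (ZMod 2) (GaloisField 2 m) x

open Finset Polynomial in
lemma aux_inj (m : ℕ) [NeZero m] :
    Function.Injective (fun S : Finset (ZMod m) => ∑ t ∈ S, 2 ^ t.val) := by
  intro S T h
  have h1 : ∀ S : Finset (ZMod m), ∑ t ∈ S, 2 ^ t.val
      = ∑ i ∈ S.map ⟨ZMod.val, ZMod.val_injective m⟩, 2 ^ i := by
    intro S; simp
  simp only [h1] at h
  have := Finset.geomSum_injective (le_refl 2) h
  exact Finset.map_injective _ this

lemma aux_lt (m : ℕ) [NeZero m] (S : Finset (ZMod m)) : ∑ t ∈ S, 2 ^ t.val < 2 ^ m := by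
  have h1 : ∑ t ∈ S, 2 ^ t.val
      = ∑ i ∈ S.map ⟨ZMod.val, ZMod.val_injective m⟩, 2 ^ i := by simp
  rw [h1]
  apply Nat.geomSum_lt le_rfl
  intro k hk
  simp only [Finset.mem_map, Function.Embedding.coeFn_mk] at hk
  obtain ⟨a, _, rfl⟩ := hk
  exact ZMod.val_lt a

lemma aux_univ (m : ℕ) [NeZero m] : ∑ t : ZMod m, 2 ^ t.val = 2 ^ m - 1 := by
  have h : ∑ t : ZMod m, 2 ^ t.val = ∑ i ∈ Finset.range m, 2 ^ i := by
    apply Finset.sum_bij (fun t _ => t.val)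
    · intro a _; simpa using ZMod.val_lt a
    · intro a _ b _ h; exact ZMod.val_injective m h
    · intro b hb
      exact ⟨(b : ZMod m), Finset.mem_univ _, ZMod.val_cast_of_lt (by simpa using hb)⟩
    · intros; rfl
  rw [h, Nat.geomSum_eq le_rfl]; simp

lemma aux_exE (m e K : ℕ) [NeZero m] (hK : K ≤ m) (he : e < 2 ^ K) :
    ∃ E : Finset (ZMod m), (∀ t ∈ E, t.val < K) ∧ ∑ t ∈ E, 2 ^ t.val = e := by
  classical
  have hlt : ∀ t ∈ e.bitIndices.toFinset, t < K := by
    intro t ht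
    have h1 : 2 ^ t ≤ ∑ i ∈ e.bitIndices.toFinset, 2 ^ i :=
      Finset.single_le_sum (f := fun i => 2 ^ i) (fun _ _ => Nat.zero_le _) ht
    rw [Finset.sum_toFinset_bitIndices_two_pow] at h1
    exact (Nat.pow_lt_pow_iff_right (by norm_num : 1 < 2)).1 (lt_of_le_of_lt h1 he)
  refine ⟨e.bitIndices.toFinset.image (fun i : ℕ => (i : ZMod m)), ?_, ?_⟩
  · intro t ht
    obtain ⟨i, hi, rfl⟩ := Finset.mem_image.1 ht
    have := hlt i hi
    rwa [ZMod.val_cast_of_lt (by omega)]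
  · rw [Finset.sum_image]
    · conv_rhs => rw [← Finset.sum_toFinset_bitIndices_two_pow e]
      apply Finset.sum_congr rfl
      intro i hi
      have := hlt i hi
      rw [ZMod.val_cast_of_lt (by omega)]
    · intro i hi j hj h
      have h1 := hlt i hi
      have h2 := hlt j hj
      have := congrArg ZMod.val h
      simpa [ZMod.val_cast_of_lt (show i < m by omega),
        ZMod.val_cast_of_lt (show j < m by omega)] using this

open Polynomial in
lemma aux_indep {F : Type*} [Field F] [Fintype F] (m : ℕ) [NeZero m]
    (hc : Fintype.card F = 2 ^ m) (c : Finset (ZMod m) → F)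
    (h : ∀ x : F, ∑ S, c S * ∏ t ∈ S, x ^ (2 ^ t.val) = 0) (S : Finset (ZMod m)) : c S = 0 := by
  classical
  let P : F[X] := ∑ S : Finset (ZMod m), C (c S) * X ^ (∑ t ∈ S, 2 ^ t.val)
  have hP : P = 0 := by
    apply eq_zero_of_natDegree_lt_card_of_eval_eq_zero P Function.injective_id
    · intro x
      rw [← h x]
      simp [P, eval_finsetSum, Finset.prod_pow_eq_pow_sum]
    · rw [hc]
      have : P.natDegree ≤ 2 ^ m - 1 := by
        apply natDegree_sum_le_of_forall_le
        intro S _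
        refine (natDegree_C_mul_X_pow_le _ _).trans ?_
        have := aux_lt m S
        omega
      have := Nat.two_pow_pos m
      omega
  have h2 : P.coeff (∑ t ∈ S, 2 ^ t.val) = c S := by
    simp only [P, finsetSum_coeff, coeff_C_mul_X_pow]
    rw [Finset.sum_eq_single S]
    · simp
    · intro T _ hT
      rw [if_neg]
      intro h
      exact hT ((aux_inj m h).symm)
    · simp
  rw [← h2, hP]; simp

lemma aux_frob {F : Type*} [Field F] [Fintype F] (m : ℕ) [NeZero m]
    (hc : Fintype.card F = 2 ^ m) (x : F) (s t : ZMod m) :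
    (x ^ (2 ^ s.val)) ^ (2 ^ t.val) = x ^ (2 ^ (s + t).val) := by
  rw [← pow_mul, ← pow_add, ZMod.val_add]
  conv_lhs => rw [← Nat.div_add_mod (s.val + t.val) m, pow_add, pow_mul, pow_mul, ← hc]
  rw [FiniteField.pow_card_pow]

lemma aux_inv {F : Type*} [Field F] [Fintype F] (m e : ℕ) [NeZero m]
    (hc : Fintype.card F = 2 ^ m) (E : Finset (ZMod m)) (hE : ∑ t ∈ E, 2 ^ t.val = e)
    (he : e ≠ 0) (hne : E ≠ Finset.univ) (x : F) :
    (x⁻¹) ^ e = ∏ t ∈ Eᶜ, x ^ (2 ^ t.val) := by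
  by_cases hx : x = 0
  · subst hx
    have : Eᶜ.Nonempty := by
      rw [Finset.nonempty_iff_ne_empty]; simpa using hne
    obtain ⟨t, ht⟩ := this
    rw [Finset.prod_eq_zero ht]
    · simp [he]
    · simp
  · have h1 : (∏ t ∈ E, x ^ (2 ^ t.val)) * ∏ t ∈ Eᶜ, x ^ (2 ^ t.val) = 1 := by
      rw [Finset.prod_mul_prod_compl, Finset.prod_pow_eq_pow_sum, aux_univ, ← hc]
      exact FiniteField.pow_card_sub_one_eq_one x hx
    rw [Finset.prod_pow_eq_pow_sum, hE] at h1
    rw [inv_pow]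
    exact (eq_inv_of_mul_eq_one_right h1).symm

open Finset in
/-- coefficient comparison -/
lemma aux_coeff {F : Type*} [Field F] [Fintype F] [CharP F 2] (m e : ℕ) [NeZero m]
    (hc : Fintype.card F = 2 ^ m) (E : Finset (ZMod m)) (hE : ∑ t ∈ E, 2 ^ t.val = e)
    (he : e ≠ 0) (hne : E ≠ Finset.univ) (β : F)
    (h : ∀ z : F, ∑ i : ZMod m, (β * ((z⁻¹) ^ e + ((z + 1)⁻¹) ^ e)) ^ (2 ^ i.val) = 0)
    (T : Finset (ZMod m)) :
    ∑ i : ZMod m, (if E.image (· + i) ⊂ T then β ^ (2 ^ i.val) else 0) = 0 := by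
  classical
  have key := aux_indep m hc
    (fun S => ∑ i : ZMod m, (if E.image (· + i) ⊂ Sᶜ then β ^ (2 ^ i.val) else 0)) ?_ Tᶜ
  · simpa using key
  intro x
  refine Eq.trans ?_ (h x)
  simp only [sum_mul]
  rw [sum_comm]
  apply sum_congr rfl
  intro i _
  rw [mul_pow, add_pow_char_pow, aux_inv m e hc E hE he hne, aux_inv m e hc E hE he hne]
  have hcomp : Eᶜ.image (· + i) = (E.image (· + i))ᶜ := by
    ext t
    simp only [mem_image, mem_compl]
    constructor
    · rintro ⟨a, ha, rfl⟩ ⟨b, hb, hab⟩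
      rw [add_right_cancel hab] at hb
      exact ha hb
    · intro h
      exact ⟨t - i, fun h' => h ⟨t - i, h', by simp⟩, by simp⟩
  have hpr : ∀ y : F, (∏ t ∈ Eᶜ, y ^ (2 ^ t.val)) ^ (2 ^ i.val)
      = ∏ t ∈ (E.image (· + i))ᶜ, y ^ (2 ^ t.val) := by
    intro y
    rw [← prod_pow, ← hcomp, prod_image (fun a _ b _ h => add_right_cancel h)]
    exact prod_congr rfl (fun t _ => aux_frob m hc y t i)
  rw [hpr, hpr]
  have hadd : ∏ t ∈ (E.image (· + i))ᶜ, (x + 1) ^ (2 ^ t.val)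
      = ∑ S ∈ ((E.image (· + i))ᶜ).powerset, ∏ t ∈ S, x ^ (2 ^ t.val) := by
    rw [← prod_add_one]
    apply prod_congr rfl
    intro t _
    rw [add_pow_char_pow, one_pow]
  rw [hadd, ← Finset.sum_erase_add _ _ (mem_powerset_self _), add_left_comm,
    CharTwo.add_self_eq_zero, add_zero, mul_sum]
  simp only [ite_mul, zero_mul]
  rw [← sum_filter]
  apply sum_congr _ (fun _ _ => rfl)
  ext S
  simp only [mem_filter, mem_univ, true_and, mem_erase, mem_powerset]
  rw [ssubset_iff_subset_ne, subset_compl_comm]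
  constructor
  · rintro ⟨h1, h2⟩
    exact ⟨fun h => h2 (by simp [h]), h1⟩
  · rintro ⟨h1, h2⟩
    exact ⟨h2, fun h => h1 (by simp [h])⟩

lemma aux_beta {F : Type*} [Field F] [Fintype F] [CharP F 2] (m e K : ℕ) [NeZero m]
    (hc : Fintype.card F = 2 ^ m) (hodd : Odd e) (hK : 4 * K ≤ m) (hK1 : 1 ≤ K)
    (heK : e < 2 ^ K) (β : F)
    (h : ∀ z : F, ∑ i : ZMod m, (β * ((z⁻¹) ^ e + ((z + 1)⁻¹) ^ e)) ^ (2 ^ i.val) = 0) :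
    β = 0 := by
  classical
  have he : e ≠ 0 := by rintro rfl; simp at hodd
  obtain ⟨E, hEK, hE⟩ := aux_exE m e K (by omega) heK
  have v0 : (0 : ZMod m).val = 0 := ZMod.val_zero
  have vc : ∀ k : ℕ, k < m → ((k : ZMod m)).val = k := fun k hk => ZMod.val_cast_of_lt hk
  have hne : E ≠ Finset.univ := by
    intro h
    have := hEK ((K : ℕ) : ZMod m) (by simp [h])
    rw [vc K (by omega)] at this
    omega
  have h0 : (0 : ZMod m) ∈ E := by
    by_contra h0
    have : Even e := by
      rw [← hE]
      apply Finset.even_sum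
      intro t ht
      have : t.val ≠ 0 := by
        intro h
        rw [ZMod.val_eq_zero] at h
        exact h0 (h ▸ ht)
      exact (Nat.even_pow.2 ⟨even_two, this⟩)
    exact (Nat.not_even_iff_odd.2 hodd) this
  have co := aux_coeff m e hc E hE he hne β h
  by_cases hw : E = {0}
  · subst hw
    simp only [Finset.image_singleton, zero_add] at co
    have d : ∀ a b : ℕ, a < m → b < m → a ≠ b → (a : ZMod m) ≠ (b : ZMod m) := by
      intro a b ha hb hab h
      apply hab
      rw [← vc a ha, ← vc b hb, h]
    have d01 : (0 : ZMod m) ≠ 1 := by simpa using d 0 1 (by omega) (by omega) (by omega)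
    have d02 : (0 : ZMod m) ≠ 2 := by simpa using d 0 2 (by omega) (by omega) (by omega)
    have d12 : (1 : ZMod m) ≠ 2 := by simpa using d 1 2 (by omega) (by omega) (by omega)
    have cs : ∀ T : Finset (ZMod m), 2 ≤ T.card → ∑ i ∈ T, β ^ (2 ^ i.val) = 0 := by
      intro T hT
      rw [← co T, ← Finset.sum_filter]
      apply Finset.sum_congr _ (fun _ _ => rfl)
      ext i
      simp only [Finset.mem_filter, Finset.mem_univ, true_and, Finset.ssubset_iff_subset_ne,
        Finset.singleton_subset_iff]
      constructor
      · intro hi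
        refine ⟨hi, ?_⟩
        rintro rfl
        simp at hT
      · exact fun h => h.1
    have c1 := cs {1, 2} (by rw [Finset.card_pair d12])
    have c2 := cs {0, 1, 2} (by
      rw [Finset.card_insert_of_notMem (by simp [d01, d02]), Finset.card_pair d12]; norm_num)
    rw [Finset.sum_insert (by simp [d01, d02]), c1] at c2
    simpa using c2
  · obtain ⟨s, hs, hs0⟩ : ∃ s ∈ E, s ≠ 0 := by
      by_contra hcon
      push Not at hcon
      exact hw (Finset.eq_singleton_iff_unique_mem.2 ⟨h0, hcon⟩)
    have hsv : s.val ≠ 0 := by rwa [Ne, ZMod.val_eq_zero]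
    obtain ⟨t, ht, htmax⟩ := Finset.exists_max_image E ZMod.val ⟨0, h0⟩
    have hpv : (((2 * K : ℕ) : ZMod m)).val = 2 * K := vc _ (by omega)
    generalize ((2 * K : ℕ) : ZMod m) = p at hpv
    have hpE : p ∉ E := by
      intro h
      have := hEK p h
      omega
    have c := co (insert p E)
    rw [Finset.sum_eq_single 0] at c
    · rw [if_pos] at c
      · simpa using c
      · simpa using Finset.ssubset_insert hpE
    · intro i _ hi
      rw [if_neg]
      intro hss
      have hsub := hss.1
      have hiv : i.val ≠ 0 := by rwa [Ne, ZMod.val_eq_zero]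
      have mem : ∀ r ∈ E, r + i = p ∨ r + i ∈ E := by
        intro r hr
        have := hsub (Finset.mem_image_of_mem (· + i) hr)
        simpa using this
      rcases mem 0 h0 with hip | hiE
      · rw [zero_add] at hip
        subst hip
        have hsK := hEK s hs
        have hv : (s + i).val = s.val + i.val := ZMod.val_add_of_lt (by omega)
        rcases mem s hs with h | h
        · rw [h] at hv; omega
        · have := hEK _ h; omega
      · rw [zero_add] at hiE
        have htK := hEK t ht
        have hiK := hEK i hiE
        have hv : (t + i).val = t.val + i.val := ZMod.val_add_of_lt (by omega)
        rcases mem t ht with h | h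
        · rw [h] at hv; omega
        · have := htmax _ h; omega
    · simp

open Polynomial in
/-- Case A: second derivative of the power map is not identically zero. -/
lemma aux_caseA {F : Type*} [Field F] [Fintype F] [CharP F 2] (e : ℕ) (he : e ≠ 0)
    (hcard : 3 * e + 4 < Fintype.card F) (a b : F) (ha : a ≠ 0) (hb : b ≠ 0) (hab : a + b ≠ 0)
    (h : ∀ x : F, (x⁻¹) ^ e + ((x + a)⁻¹) ^ e + ((x + b)⁻¹) ^ e + ((x + (a + b))⁻¹) ^ e = 0) :
    False := by
  classical
  let P : F[X] := (X + C a) ^ e * (X + C b) ^ e * (X + C (a + b)) ^ e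
    + X ^ e * ((X + C b) ^ e * (X + C (a + b)) ^ e
    + (X + C a) ^ e * (X + C (a + b)) ^ e + (X + C a) ^ e * (X + C b) ^ e)
  have hdeg : P.natDegree ≤ 3 * e := by
    have h1 : ∀ d : F, ((X + C d : F[X]) ^ e).natDegree ≤ e := by
      intro d
      refine natDegree_pow_le.trans ?_
      simp
    have h2 : ∀ d d' : F, ((X + C d : F[X]) ^ e * (X + C d') ^ e).natDegree ≤ e + e :=
      fun d d' => natDegree_mul_le_of_le (h1 d) (h1 d')
    refine natDegree_add_le_of_degree_le ?_ ?_
    · exact (natDegree_mul_le_of_le (h2 a b) (h1 (a + b))).trans (by omega)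
    · refine (natDegree_mul_le_of_le (natDegree_X_pow_le e) (n := e + e) ?_).trans (by omega)
      exact natDegree_add_le_of_degree_le (natDegree_add_le_of_degree_le (h2 _ _) (h2 _ _)) (h2 _ _)
  have hP : P = 0 := by
    apply eq_zero_of_natDegree_lt_card_of_eval_eq_zero' P
      (Finset.univ \ {0, a, b, a + b})
    · intro x hx
      simp only [Finset.mem_sdiff, Finset.mem_univ, Finset.mem_insert, Finset.mem_singleton,
        true_and, not_or] at hx
      obtain ⟨x0, xa, xb, xc⟩ := hx
      have ne : ∀ d : F, x ≠ d → x + d ≠ 0 := by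
        intro d hd h
        exact hd (CharTwo.add_eq_zero.1 h)
      have n1 := pow_ne_zero e x0
      have n2 := pow_ne_zero e (ne _ xa)
      have n3 := pow_ne_zero e (ne _ xb)
      have n4 := pow_ne_zero e (ne _ xc)
      have := h x
      simp only [inv_pow] at this
      simp only [P, eval_add, eval_mul, eval_pow, eval_X, eval_C]
      generalize x ^ e = p at *
      generalize (x + a) ^ e = q at *
      generalize (x + b) ^ e = r at *
      generalize (x + (a + b)) ^ e = s at *
      field_simp at this
      linear_combination this
    · have h4 : ({0, a, b, a + b} : Finset F).card ≤ 4 := Finset.card_le_four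
      have h5 := Finset.le_card_sdiff ({0, a, b, a + b} : Finset F) Finset.univ
      rw [Finset.card_univ] at h5
      omega
  have h0 : P.eval 0 = 0 := by rw [hP]; simp
  simp [P, he, ha, hb, hab] at h0

lemma aux_bound (m e : ℕ) (he : 0 < e) (hbound : (4 * e : ℝ) ≤ 2 ^ ((m : ℝ) / 4) - 1) :
    1 ≤ m / 4 ∧ e < 2 ^ (m / 4) ∧ 3 * e + 4 < 2 ^ m := by
  have h1 : (2 : ℝ) ^ ((m : ℝ) / 4) < 2 ^ (m / 4 + 1) := by
    rw [← Real.rpow_natCast]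
    apply Real.rpow_lt_rpow_of_exponent_lt (by norm_num)
    have : m < 4 * (m / 4 + 1) := by omega
    have : (m : ℝ) < 4 * ((m / 4 + 1 : ℕ) : ℝ) := by exact_mod_cast this
    linarith
  have h2 : (4 * e + 1 : ℝ) < 2 ^ (m / 4 + 1) := by linarith
  have h3 : 4 * e + 1 < 2 ^ (m / 4 + 1) := by exact_mod_cast h2
  have h4 : 1 ≤ m / 4 := by
    by_contra h
    have : m / 4 = 0 := by omega
    rw [this] at h3
    omega
  rw [pow_succ] at h3
  refine ⟨h4, by omega, ?_⟩
  have h5 : 2 ^ (m / 4 + 3) ≤ 2 ^ m := Nat.pow_le_pow_right (by norm_num) (by omega)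
  rw [pow_add] at h5
  omega

/-- Remark 4.8: for `f̃(x,y) = Tr(y x^{-e})` with `e` odd, `gcd(e, 2^m-1) = 1` and
`4e ≤ 2^{m/4} - 1`, every `M`-subspace of `f̃` of dimension at least `2` is contained in
`{0} × F_{2^m}`; in particular `{0} × F_{2^m}` is the unique `M`-subspace of dimension `m`. -/
theorem gPSap_monomial_unique_M_subspace
    (m : ℕ) (hm : 4 ≤ m) (e : ℕ) (he : 0 < e) (heodd : Odd e)
    (hgcd : Nat.gcd e (2 ^ m - 1) = 1)
    (hbound : (4 * e : ℝ) ≤ 2 ^ ((m : ℝ) / 4) - 1)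
    (f : GaloisField 2 m × GaloisField 2 m → ZMod 2)
    (hf : ∀ x y, f (x, y) = Tr m (y * (x⁻¹) ^ e)) :
    IsMSubspace f ((⊥ : Submodule (ZMod 2) (GaloisField 2 m)).prod
        (⊤ : Submodule (ZMod 2) (GaloisField 2 m))) ∧
    (∀ U : Submodule (ZMod 2) (GaloisField 2 m × GaloisField 2 m),
      IsMSubspace f U → 2 ≤ Module.finrank (ZMod 2) U →
      U ≤ (⊥ : Submodule (ZMod 2) (GaloisField 2 m)).prod
            (⊤ : Submodule (ZMod 2) (GaloisField 2 m))) ∧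
    (∀ U : Submodule (ZMod 2) (GaloisField 2 m × GaloisField 2 m),
      IsMSubspace f U → Module.finrank (ZMod 2) U = m →
      U = (⊥ : Submodule (ZMod 2) (GaloisField 2 m)).prod
            (⊤ : Submodule (ZMod 2) (GaloisField 2 m))) := by
  classical
  have : NeZero m := ⟨by omega⟩
  have : Fact (Nat.Prime 2) := ⟨Nat.prime_two⟩
  have : Fintype (GaloisField 2 m) := Fintype.ofFinite _
  have hcard : Fintype.card (GaloisField 2 m) = 2 ^ m := by
    rw [← Nat.card_eq_fintype_card]; exact GaloisField.card 2 m (by omega)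
  have hfr : Module.finrank (ZMod 2) (GaloisField 2 m) = m := GaloisField.finrank 2 (by omega)
  obtain ⟨hK1, heK, hbig⟩ := aux_bound m e he hbound
  have hadd : ∀ x y, Tr m (x + y) = Tr m x + Tr m y := fun x y => map_add _ x y
  have hz2 : ∀ z : ZMod 2, z + z = 0 := CharTwo.add_self_eq_zero
  have hs2 : ∀ z : GaloisField 2 m, z + z = 0 := CharTwo.add_self_eq_zero
  have part2 : ∀ U : Submodule (ZMod 2) (GaloisField 2 m × GaloisField 2 m),
      IsMSubspace f U → 2 ≤ Module.finrank (ZMod 2) U →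
      U ≤ (⊥ : Submodule (ZMod 2) (GaloisField 2 m)).prod
            (⊤ : Submodule (ZMod 2) (GaloisField 2 m)) := by
    intro U hU hdim
    by_contra hcon
    obtain ⟨u, hu, hu1⟩ : ∃ u ∈ U, u.1 ≠ 0 := by
      by_contra hc
      push Not at hc
      exact hcon fun u hu => by simp [Submodule.mem_prod, hc u hu]
    obtain ⟨v, hv, hvs⟩ : ∃ v ∈ U, v ∉ Submodule.span (ZMod 2) {u} := by
      by_contra hc
      push Not at hc
      have h1 : U ≤ Submodule.span (ZMod 2) {u} := hc
      have h2 := Submodule.finrank_mono h1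
      have h3 := finrank_span_le_card (R := ZMod 2) ({u} : Set (GaloisField 2 m × GaloisField 2 m))
      simp at h3
      omega
    have caseB : ∀ w ∈ U, w.1 = 0 → w.2 ≠ 0 → False := by
      rintro ⟨w1, b⟩ hw h1 h2
      obtain ⟨a, a'⟩ := u
      simp only at h1 h2 hu1
      subst h1
      have h := hU _ hu _ hw
      have key : ∀ x, Tr m (b * ((x⁻¹) ^ e + ((x + a)⁻¹) ^ e)) = 0 := by
        intro x
        have := h (x, 0)
        simp only [D2, Prod.mk_add_mk, hf, add_zero, zero_add, add_mul, mul_add, hadd,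
          zero_mul] at this
        rw [mul_add, hadd]
        have t0 : Tr m 0 = 0 := map_zero _
        rw [t0] at this
        linear_combination this - hz2 (Tr m (a' * (x + a)⁻¹ ^ e))
      have hβ := aux_beta m e (m / 4) hcard heodd (by omega) hK1 heK (b * (a⁻¹) ^ e) (by
        intro z
        have k := key (a * z)
        have k2 : b * (((a * z)⁻¹) ^ e + ((a * z + a)⁻¹) ^ e)
            = b * (a⁻¹) ^ e * ((z⁻¹) ^ e + ((z + 1)⁻¹) ^ e) := by
          rw [show a * z + a = a * (z + 1) by ring, mul_inv, mul_inv, mul_pow, mul_pow]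
          ring
        rw [k2] at k
        have k3 := FiniteField.algebraMap_trace_eq_sum_pow (ZMod 2) (GaloisField 2 m)
          (b * (a⁻¹) ^ e * ((z⁻¹) ^ e + ((z + 1)⁻¹) ^ e))
        unfold Tr at k
        rw [k, map_zero, hfr, Nat.card_zmod] at k3
        rw [k3]
        apply Finset.sum_bij (fun t _ => t.val)
        · intro a _; simpa using ZMod.val_lt a
        · intro a _ b _ h; exact ZMod.val_injective m h
        · intro b hb
          exact ⟨(b : ZMod m), Finset.mem_univ _, ZMod.val_cast_of_lt (by simpa using hb)⟩
        · intros; rfl)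
      simp [h2, hu1] at hβ
    have hv0 : v ≠ 0 := by rintro rfl; exact hvs (Submodule.zero_mem _)
    have hvu : v + u ≠ 0 := by
      intro h
      apply hvs
      rw [eq_neg_of_add_eq_zero_left h]
      exact Submodule.neg_mem _ (Submodule.mem_span_singleton_self u)
    by_cases hv1 : v.1 = 0
    · exact caseB v hv hv1 fun h => hv0 (Prod.ext hv1 h)
    by_cases hvu1 : (v + u).1 = 0
    · exact caseB (v + u) (U.add_mem hv hu) hvu1 fun h => hvu (Prod.ext hvu1 h)
    have h := hU _ hu _ hv
    refine aux_caseA e (by omega) (by rw [hcard]; exact hbig) u.1 v.1 hu1 hv1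
      (by rw [add_comm]; exact hvu1) ?_
    intro x
    obtain ⟨a, a'⟩ := u
    obtain ⟨b, b'⟩ := v
    simp only at *
    apply (traceForm_nondegenerate (ZMod 2) (GaloisField 2 m)).1
    intro y
    rw [Algebra.traceForm_apply]
    have hy := h (x, y)
    have h0 := h (x, 0)
    simp only [D2, Prod.mk_add_mk, hf, zero_add, add_mul, hadd, zero_mul, add_assoc] at hy h0
    have t0 : Tr m 0 = 0 := map_zero _
    rw [t0] at h0
    change Tr m _ = 0
    rw [mul_comm]
    simp only [mul_add, hadd, add_assoc]
    linear_combination hy - h0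
  refine ⟨?_, part2, ?_⟩
  · rintro ⟨a, a'⟩ ha ⟨b, b'⟩ hb ⟨x, y⟩
    simp only [Submodule.mem_prod, Submodule.mem_bot, Submodule.mem_top, and_true] at ha hb
    subst ha hb
    simp only [D2, Prod.mk_add_mk, hf, add_zero, add_mul, hadd]
    linear_combination 2 * hz2 (Tr m (y * x⁻¹ ^ e)) + hz2 (Tr m (a' * x⁻¹ ^ e)) + hz2 (Tr m (b' * x⁻¹ ^ e))
  · intro U hU hdim
    apply Submodule.eq_of_le_of_finrank_eq (part2 U hU (by omega))
    have hr : (⊥ : Submodule (ZMod 2) (GaloisField 2 m)).prod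
        (⊤ : Submodule (ZMod 2) (GaloisField 2 m))
        = LinearMap.range (LinearMap.inr (ZMod 2) (GaloisField 2 m) (GaloisField 2 m)) := by
      ext ⟨x, y⟩
      simp [Submodule.mem_prod, eq_comm]
    rw [hdim, hr, LinearMap.finrank_range_of_inj LinearMap.inr_injective, hfr]
end

section
/- Let m ≥ 4 and let e be a positive integer with gcd(e, 2^m − 1) = 1. Let Q ∈ F_{2^m}[X] be a polynomial with Q(0) = 0, of odd degree t, whose evaluation map is a permutation of F_{2^m}, and assume 4·e·t ≤ 2^{m/4} − 1 (an inequality of real numbers). Assume moreover that for every λ ∈ F_{2^m} \ {0, 1}, the function g_λ : F_{2^m} → F_2 defined by g_λ(x) = Tr_1^m(Q((1+λ)·(x⁻¹)^e) + Q((x⁻¹)^e) + Q(λ·(x⁻¹)^e)) is not constant. Define f̃ : F_{2^m} × F_{2^m} → F_2 by f̃(x,y) = Tr_1^m(Q(y · (x⁻¹)^e)). Then for every pair of linearly independent vectors u, v ∈ F_{2^m} × F_{2^m}, the second-order derivative D_u D_v f̃ is not constant on F_{2^m} × F_{2^m}. -/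
open Polynomial

lemma nt_aux (m l j D i : ℕ) (hD : Odd D) (hjD : j ≤ D) (hDl : D < 2 ^ l) (hl : 2 * l ≤ m)
    (hi : i < m) (hdvd : (2 ^ m - 1) ∣ j * 2 ^ i + (2 ^ m - 1 - D)) : i = 0 ∧ j = D := by
  have hl1 : 1 ≤ l := by
    rcases l with _ | l
    · simp at hDl; subst hDl; simp at hD
    · omega
  have hD1 : 1 ≤ D := hD.pos
  have h2l : 2 ^ l * 2 ^ l ≤ 2 ^ m := by
    rw [← pow_add]; exact Nat.pow_le_pow_right (by norm_num) (by omega)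
  have hl2 : 2 ≤ 2 ^ l := by
    calc 2 = 2 ^ 1 := by norm_num
      _ ≤ 2 ^ l := Nat.pow_le_pow_right (by norm_num) hl1
  have hDq : D + 1 < 2 ^ m := by nlinarith
  have hd : ((2 : ℤ) ^ m - 1) ∣ (j : ℤ) * 2 ^ i - D := by
    have h := Int.natCast_dvd_natCast.mpr hdvd
    have e1 : ((2 ^ m - 1 : ℕ) : ℤ) = 2 ^ m - 1 := by
      rw [Nat.cast_sub (by omega)]; push_cast; rfl
    have e2 : ((2 ^ m - 1 - D : ℕ) : ℤ) = 2 ^ m - 1 - D := by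
      rw [Nat.cast_sub (by omega), e1]
    push_cast [e1, e2] at h
    have : (j : ℤ) * 2 ^ i - D = (j * 2 ^ i + (2 ^ m - 1 - D)) - (2 ^ m - 1) := by ring
    rw [this]
    exact dvd_sub h (dvd_refl _)
  have hsmall : ∀ z : ℤ, ((2 : ℤ) ^ m - 1) ∣ z → |z| < 2 ^ m - 1 → z = 0 := fun z h1 h2 =>
    Int.eq_zero_of_abs_lt_dvd h1 h2
  have hDq' : (D : ℤ) + 1 < 2 ^ m := by exact_mod_cast hDq
  have hjD' : (j : ℤ) ≤ D := by exact_mod_cast hjD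
  have hj0 : (0 : ℤ) ≤ j := by positivity
  have hD1' : (1 : ℤ) ≤ D := by exact_mod_cast hD1
  have hDl' : (D : ℤ) + 1 ≤ 2 ^ l := by exact_mod_cast hDl
  by_cases hil : i < l
  · have h2i : (2 : ℤ) ^ i ≤ 2 ^ l := pow_le_pow_right₀ (by norm_num) hil.le
    have hi1 : (1 : ℤ) ≤ 2 ^ i := one_le_pow₀ (by norm_num)
    have h2l' : (2 : ℤ) ^ l * 2 ^ l ≤ 2 ^ m := by exact_mod_cast h2l
    have hl2' : (2 : ℤ) ≤ 2 ^ l := by exact_mod_cast hl2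
    have hz := hsmall _ hd (by
      rw [abs_lt]
      constructor
      · nlinarith
      · nlinarith)
    have hz' : j * 2 ^ i = D := by
      have : (j : ℤ) * 2 ^ i = D := by linarith
      exact_mod_cast this
    rcases Nat.eq_zero_or_pos i with h0 | h0
    · subst h0; simpa using hz'
    · exfalso
      obtain ⟨n, rfl⟩ : ∃ n, i = n + 1 := ⟨i - 1, by omega⟩
      rw [← hz', pow_succ] at hD
      have := (Nat.odd_mul.mp hD).2
      have := (Nat.odd_mul.mp this).2
      exact absurd this (by decide)
  · exfalso
    obtain ⟨r, rfl⟩ : ∃ r, m = i + r := ⟨m - i, by omega⟩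
    have hr1 : 1 ≤ r := by omega
    have hri : r + l ≤ i + r := by omega
    have hd2 : ((2 : ℤ) ^ (i + r) - 1) ∣ 2 ^ r * D - j := by
      have : (2 : ℤ) ^ r * D - j = (2 ^ (i + r) - 1) * j - 2 ^ r * (j * 2 ^ i - D) := by
        rw [pow_add]; ring
      rw [this]
      exact dvd_sub (dvd_mul_right _ _) (hd.mul_left _)
    have hr2 : (2 : ℤ) ≤ 2 ^ r := by
      calc (2 : ℤ) = 2 ^ 1 := by norm_num
        _ ≤ 2 ^ r := pow_le_pow_right₀ (by norm_num) hr1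
    have hrl : (2 : ℤ) ^ r * 2 ^ l ≤ 2 ^ (i + r) := by
      rw [← pow_add]; exact pow_le_pow_right₀ (by norm_num) hri
    have hz := hsmall _ hd2 (by
      rw [abs_lt]
      constructor
      · nlinarith
      · nlinarith)
    nlinarith

noncomputable instance instFintypeGF (m : ℕ) : Fintype (GaloisField 2 m) := Fintype.ofFinite _

lemma cardGF (m : ℕ) (hm : m ≠ 0) : Fintype.card (GaloisField 2 m) = 2 ^ m := by
  rw [← Nat.card_eq_fintype_card]; exact GaloisField.card 2 m hm

lemma Tr_formula (m : ℕ) (hm : m ≠ 0) (x : GaloisField 2 m) :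
    algebraMap (ZMod 2) (GaloisField 2 m) (Tr m x) = ∑ i ∈ Finset.range m, x ^ (2 ^ i) := by
  unfold Tr
  rw [FiniteField.algebraMap_trace_eq_sum_pow, GaloisField.finrank 2 hm]
  simp

lemma Tr_add (m : ℕ) (x y : GaloisField 2 m) : Tr m (x + y) = Tr m x + Tr m y := by
  unfold Tr; exact map_add _ _ _

lemma Tr_zero (m : ℕ) : Tr m 0 = 0 := by
  unfold Tr; exact map_zero _

lemma Tr_sum (m : ℕ) {ι : Type*} (s : Finset ι) (g : ι → GaloisField 2 m) :
    Tr m (∑ i ∈ s, g i) = ∑ i ∈ s, Tr m (g i) := by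
  unfold Tr; exact map_sum _ _ _

lemma Tr_frob (m : ℕ) (hm : m ≠ 0) (x : GaloisField 2 m) (k : ℕ) :
    Tr m (x ^ (2 ^ k)) = Tr m x := by
  have h1 : ∀ x : GaloisField 2 m, Tr m (x ^ 2) = Tr m x := by
    intro x
    apply FaithfulSMul.algebraMap_injective (ZMod 2) (GaloisField 2 m)
    rw [Tr_formula m hm, Tr_formula m hm]
    obtain ⟨n, rfl⟩ : ∃ n, m = n + 1 := ⟨m - 1, by omega⟩
    rw [Finset.sum_range_succ, Finset.sum_range_succ']
    have : (x ^ 2) ^ (2 ^ n) = x ^ (2 ^ 0) := by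
      rw [← pow_mul, ← pow_succ', ← cardGF (n + 1) hm, FiniteField.pow_card]; simp
    rw [this]
    congr 1
    apply Finset.sum_congr rfl
    intro i _
    rw [← pow_mul, ← pow_succ']
  induction k with
  | zero => simp
  | succ k ih => rw [pow_succ, pow_mul, h1, ih]

lemma coefT (m l D : ℕ) (hm : m ≠ 0) (hD : Odd D) (hDl : D < 2 ^ l) (hl : 2 * l ≤ m)
    (P : (GaloisField 2 m)[X]) (hP : P.natDegree ≤ D) (ε : ZMod 2)
    (h : ∀ y, Tr m (P.eval y) = ε) : P.coeff D = 0 := by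
  classical
  have hD1 : 1 ≤ D := hD.pos
  have hDq : D + 1 < 2 ^ m := by
    have hl1 : 1 ≤ l := by
      rcases l with _ | l
      · simp at hDl; omega
      · omega
    have h2l : 2 ^ l * 2 ^ l ≤ 2 ^ m := by
      rw [← pow_add]; exact Nat.pow_le_pow_right (by norm_num) (by omega)
    have hl2 : 2 ≤ 2 ^ l := by
      calc 2 = 2 ^ 1 := by norm_num
        _ ≤ 2 ^ l := Nat.pow_le_pow_right (by norm_num) hl1
    nlinarith
  have hsum : ∀ i : ℕ, (∑ x : (GaloisField 2 m)ˣ, (x ^ i : GaloisField 2 m)) =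
      if (2 ^ m - 1) ∣ i then -1 else 0 := by
    intro i
    rw [FiniteField.sum_pow_units, cardGF m hm]
  have e1 : (∑ x : (GaloisField 2 m)ˣ, (x ^ (2 ^ m - 1 - D) : GaloisField 2 m) *
      algebraMap (ZMod 2) (GaloisField 2 m) (Tr m (P.eval (x : GaloisField 2 m)))) = 0 := by
    simp_rw [h]
    rw [← Finset.sum_mul, hsum, if_neg, zero_mul]
    intro hdvd
    have := Nat.le_of_dvd (by omega) hdvd
    omega
  have e2 : ∀ x : GaloisField 2 m, x ^ (2 ^ m - 1 - D) *
      algebraMap (ZMod 2) (GaloisField 2 m) (Tr m (P.eval x)) =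
      ∑ i ∈ Finset.range m, ∑ j ∈ Finset.range (D + 1),
        (P.coeff j) ^ (2 ^ i) * x ^ (j * 2 ^ i + (2 ^ m - 1 - D)) := by
    intro x
    rw [Tr_formula m hm, Finset.mul_sum]
    apply Finset.sum_congr rfl
    intro i _
    rw [eval_eq_sum_range' (Nat.lt_succ_of_le hP), sum_pow_char_pow, Finset.mul_sum]
    apply Finset.sum_congr rfl
    intro j _
    rw [mul_pow, ← pow_mul, pow_add]; ring
  simp_rw [e2] at e1
  rw [Finset.sum_comm] at e1
  have e3 : ∀ i ∈ Finset.range m, (∑ x : (GaloisField 2 m)ˣ, ∑ j ∈ Finset.range (D + 1),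
        (P.coeff j) ^ (2 ^ i) * (x : GaloisField 2 m) ^ (j * 2 ^ i + (2 ^ m - 1 - D))) =
        if i = 0 then - P.coeff D else 0 := by
    intro i hi
    rw [Finset.sum_comm]
    simp_rw [← Finset.mul_sum, hsum]
    rw [Finset.sum_eq_single D]
    · split_ifs with h1 h2 h2
      · subst h2; simp
      · exact absurd (nt_aux m l D D i hD le_rfl hDl hl (Finset.mem_range.mp hi) h1).1 h2
      · exfalso; apply h1; subst h2
        rw [pow_zero, mul_one, Nat.add_sub_cancel' (by omega)]
      · simp
    · intro j hj hjD
      rw [if_neg, mul_zero]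
      intro h1
      exact hjD (nt_aux m l j D i hD (by simpa [Nat.lt_succ_iff] using hj) hDl hl
        (Finset.mem_range.mp hi) h1).2
    · simp
  rw [Finset.sum_congr rfl e3] at e1
  simpa [hm, Nat.pos_of_ne_zero hm] using e1

noncomputable def Rs {R : Type*} [CommRing R] (k s : ℕ) (P : R[X]) : R :=
  ∑ i ∈ Finset.range k, (P.coeff (s * 2 ^ i)) ^ (2 ^ (k - i))

lemma Rs_add {R : Type*} [CommRing R] [CharP R 2] (k s : ℕ) (P S : R[X]) :
    Rs k s (P + S) = Rs k s P + Rs k s S := by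
  unfold Rs
  rw [← Finset.sum_add_distrib]
  apply Finset.sum_congr rfl
  intro i _
  rw [coeff_add, add_pow_char_pow]

lemma sum_odd_part {M : Type*} [AddCommMonoid M] (t k : ℕ) (htk : t < 2 ^ k) (g : ℕ → M)
    (hg : ∀ j, t < j → g j = 0) :
    ∑ j ∈ Finset.range (t + 1), g j =
      g 0 + ∑ s ∈ (Finset.range (t + 1)).filter Odd, ∑ i ∈ Finset.range k, g (s * 2 ^ i) := by
  have h1 : ∑ j ∈ Finset.range (t + 1), g j = g 0 + ∑ j ∈ Finset.Icc 1 t, g j := by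
    rw [Finset.sum_range_succ', add_comm]
    congr 1
    rw [Finset.range_eq_Ico, Finset.sum_Ico_add' g 0 t 1]
    rfl
  have h2 : ∑ j ∈ Finset.Icc 1 t, g j = ∑ j ∈ Finset.Icc 1 (t * 2 ^ k), g j := by
    apply Finset.sum_subset
    · apply Finset.Icc_subset_Icc_right
      exact Nat.le_mul_of_pos_right _ (by positivity)
    · intro j hj hj'
      apply hg
      simp only [Finset.mem_Icc] at hj hj'
      omega
  rw [h1, h2, ← Finset.sum_product']
  congr 1
  symm
  apply Finset.sum_of_injOn (fun p : ℕ × ℕ => p.1 * 2 ^ p.2)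
  · rintro ⟨s, i⟩ h ⟨s', i'⟩ h' heq
    simp only [Finset.coe_product, Set.mem_prod, Finset.mem_coe, Finset.mem_filter] at h h' heq
    have key : ∀ s i s' i' : ℕ, Odd s → Odd s' → i ≤ i' → s * 2 ^ i = s' * 2 ^ i' →
        s = s' ∧ i = i' := by
      intro s i s' i' hs hs' hii h
      obtain ⟨r, rfl⟩ := Nat.exists_eq_add_of_le hii
      have h3 : s = s' * 2 ^ r := by
        have : s * 2 ^ i = (s' * 2 ^ r) * 2 ^ i := by rw [h, pow_add]; ring
        exact Nat.eq_of_mul_eq_mul_right (by positivity) this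
      rcases r with _ | r
      · simpa using h3
      · exfalso
        rw [h3, pow_succ] at hs
        have := (Nat.odd_mul.mp (Nat.odd_mul.mp hs).2).2
        exact absurd this (by decide)
    rcases le_total i i' with hle | hle
    · obtain ⟨rfl, rfl⟩ := key s i s' i' h.1.2 h'.1.2 hle heq
      rfl
    · obtain ⟨rfl, rfl⟩ := key s' i' s i h'.1.2 h.1.2 hle heq.symm
      rfl
  · rintro ⟨s, i⟩ h
    simp only [Finset.coe_product, Set.mem_prod, Finset.mem_coe, Finset.mem_filter,
      Finset.mem_range, Finset.mem_Icc] at h ⊢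
    refine ⟨?_, ?_⟩
    · exact Nat.mul_pos h.1.2.pos (by positivity)
    · exact Nat.mul_le_mul (by omega) (Nat.pow_le_pow_right (by norm_num) h.2.le)
  · intro j hj hj'
    apply hg
    by_contra hle
    apply hj'
    simp only [Finset.mem_Icc] at hj
    obtain ⟨i, s, hs, rfl⟩ := Nat.exists_eq_two_pow_mul_odd (n := j) (by omega)
    refine ⟨(s, i), ?_, by simp [mul_comm]⟩
    simp only [Finset.coe_product, Set.mem_prod, Finset.mem_coe, Finset.mem_filter,
      Finset.mem_range]
    have h4 : s ≤ 2 ^ i * s := Nat.le_mul_of_pos_left _ (by positivity)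
    refine ⟨⟨by omega, hs⟩, ?_⟩
    have h5 : 2 ^ i ≤ 2 ^ i * s := Nat.le_mul_of_pos_right _ hs.pos
    exact (Nat.pow_lt_pow_iff_right (by norm_num : 1 < 2)).mp (by omega)
  · intro p _; rfl

lemma Tr_red (m k t : ℕ) (hm : m ≠ 0) (htk : t < 2 ^ k)
    (P : (GaloisField 2 m)[X]) (hP : P.natDegree ≤ t) (y : GaloisField 2 m) :
    Tr m (P.eval y) = Tr m (P.coeff 0) +
      Tr m (∑ s ∈ (Finset.range (t + 1)).filter Odd, Rs k s P * (y ^ (2 ^ k)) ^ s) := by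
  rw [eval_eq_sum_range' (Nat.lt_succ_of_le hP), Tr_sum, Tr_sum,
    sum_odd_part t k htk (fun j => Tr m (P.coeff j * y ^ j))]
  · congr 1
    · simp
    · apply Finset.sum_congr rfl
      intro s _
      unfold Rs
      rw [Finset.sum_mul, Tr_sum]
      apply Finset.sum_congr rfl
      intro i hi
      have hi' := Finset.mem_range.mp hi
      rw [← Tr_frob m hm (P.coeff (s * 2 ^ i) * y ^ (s * 2 ^ i)) (k - i), mul_pow]
      congr 2
      rw [← pow_mul, ← pow_mul, mul_assoc, ← pow_add, Nat.add_sub_cancel' hi'.le, mul_comm]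
  · intro j hj
    rw [coeff_eq_zero_of_natDegree_lt (by omega), zero_mul, Tr_zero]

lemma Rs_zero_of_const (m k t : ℕ) (hm : m ≠ 0) (htk : t < 2 ^ k) (hkm : 2 * k ≤ m)
    (P : (GaloisField 2 m)[X]) (hP : P.natDegree ≤ t) (ε : ZMod 2)
    (h : ∀ y, Tr m (P.eval y) = ε) (s : ℕ) (hs : Odd s) (hst : s ≤ t) : Rs k s P = 0 := by
  classical
  set P' : (GaloisField 2 m)[X] :=
    ∑ s ∈ (Finset.range (t + 1)).filter Odd, C (Rs k s P) * X ^ s with hP'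
  have hc : ∀ j, P'.coeff j = if j ∈ (Finset.range (t + 1)).filter Odd then Rs k j P else 0 := by
    intro j
    rw [hP', finsetSum_coeff]
    simp only [coeff_C_mul, coeff_X_pow, mul_ite, mul_one, mul_zero]
    rw [Finset.sum_ite_eq]
  have hsurj : Function.Surjective (fun y : GaloisField 2 m => y ^ (2 ^ k)) := by
    apply Finite.surjective_of_injective
    exact iterateFrobenius_inj (GaloisField 2 m) 2 k
  have hcon : ∀ y, Tr m (P'.eval y) = ε + Tr m (P.coeff 0) := by
    intro y
    obtain ⟨w, rfl⟩ := hsurj y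
    have h1 := Tr_red m k t hm htk P hP w
    rw [h] at h1
    have h2 : P'.eval (w ^ (2 ^ k)) =
        ∑ s ∈ (Finset.range (t + 1)).filter Odd, Rs k s P * (w ^ (2 ^ k)) ^ s := by
      rw [hP', eval_finsetSum]; simp
    simp only [h2]
    rw [h1]
    generalize Tr m (P.coeff 0) = A
    generalize Tr m _ = B
    revert A B; decide
  have hz : P' = 0 := by
    by_contra hne
    have hl : P'.coeff P'.natDegree ≠ 0 := by simpa using hne
    have hl' := hl
    rw [hc] at hl
    split_ifs at hl with hmem
    · simp only [Finset.mem_filter, Finset.mem_range] at hmem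
      exact hl' (coefT m k _ hm hmem.2 (by omega) hkm P' le_rfl _ hcon)
    · exact hl rfl
  have h3 := hc s
  rw [hz, if_pos (by simp [hs]; omega)] at h3
  simpa using h3.symm

lemma card_compl {K : Type*} [Field K] [Fintype K] [DecidableEq K] (S : Finset K) :
    Fintype.card K ≤ (Finset.univ \ S).card + S.card := by
  have := Finset.le_card_sdiff S (Finset.univ : Finset K)
  rw [Finset.card_univ] at this
  omega

lemma reverse_eval {K : Type*} [Field K] (A : K[X]) (x : K) (hx : x ≠ 0) :
    A.reverse.eval x = x ^ A.natDegree * A.eval x⁻¹ := by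
  have : Invertible x⁻¹ := invertibleOfNonzero (inv_ne_zero hx)
  have h := eval₂_reverse_mul_pow (RingHom.id K) x⁻¹ A
  rw [invOf_eq_inv, inv_inv] at h
  change A.reverse.eval x * _ = A.eval x⁻¹ at h
  rw [← h, inv_pow]
  field_simp

lemma ratR {K : Type*} [Field K] [Fintype K] (A B : K[X]) (N e : ℕ) (he : 0 < e) (a : K)
    (ha : a ≠ 0) (hA : A.natDegree ≤ N) (hB : B.natDegree ≤ N)
    (hN : 2 * (e * N) + 2 < Fintype.card K)
    (h : ∀ x, x ≠ 0 → x + a ≠ 0 → A.eval ((x⁻¹) ^ e) + B.eval (((x + a)⁻¹) ^ e) = 0) :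
    A.natDegree = 0 := by
  classical
  by_contra hA0
  set M := B.natDegree
  set W : K[X] := (A.reverse.comp (X ^ e)) * (X + C a) ^ (e * M) +
    X ^ (e * A.natDegree) * (B.reverse.comp ((X + C a) ^ e)) with hW
  have hWz : W = 0 := by
    apply eq_zero_of_natDegree_lt_card_of_eval_eq_zero' W (Finset.univ \ {0, -a})
    · intro x hx
      simp only [Finset.mem_sdiff, Finset.mem_univ, true_and, Finset.mem_insert,
        Finset.mem_singleton, not_or] at hx
      have hx2 : x + a ≠ 0 := fun h => hx.2 (eq_neg_of_add_eq_zero_left h)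
      have h1 := h x hx.1 hx2
      rw [hW]
      simp only [eval_add, eval_mul, eval_comp, eval_pow, eval_X, eval_C]
      rw [reverse_eval A _ (pow_ne_zero e hx.1), reverse_eval B _ (pow_ne_zero e hx2),
        ← inv_pow, ← inv_pow, ← pow_mul, ← pow_mul]
      linear_combination x ^ (e * A.natDegree) * (x + a) ^ (e * M) * h1
    · have hc := card_compl ({0, -a} : Finset K)
      have hc2 : ({0, -a} : Finset K).card ≤ 2 := Finset.card_le_two
      have hr : A.reverse.natDegree ≤ N := (reverse_natDegree_le A).trans hA
      have hr' : B.reverse.natDegree ≤ N := (reverse_natDegree_le B).trans hB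
      have hXa : ∀ n, ((X + C a) ^ n : K[X]).natDegree ≤ n := by
        intro n
        refine natDegree_pow_le.trans ?_
        rw [natDegree_X_add_C]; omega
      have hXn : ∀ n, ((X : K[X]) ^ n).natDegree ≤ n := natDegree_X_pow_le
      have d1 : ((A.reverse.comp (X ^ e)) * (X + C a) ^ (e * M)).natDegree ≤ 2 * (e * N) := by
        refine natDegree_mul_le.trans ?_
        refine (add_le_add (natDegree_comp_le.trans (Nat.mul_le_mul hr (hXn e)))
          (hXa _)).trans ?_
        have : e * M ≤ e * N := Nat.mul_le_mul_left _ hB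
        rw [mul_comm N e]; omega
      have d2 : (X ^ (e * A.natDegree) * (B.reverse.comp ((X + C a) ^ e))).natDegree
          ≤ 2 * (e * N) := by
        refine natDegree_mul_le.trans ?_
        refine (add_le_add (hXn _) (natDegree_comp_le.trans (Nat.mul_le_mul hr' (hXa e)))).trans ?_
        have : e * A.natDegree ≤ e * N := Nat.mul_le_mul_left _ hA
        rw [mul_comm N e]; omega
      have : W.natDegree ≤ 2 * (e * N) := natDegree_add_le_of_degree_le d1 d2
      omega
  have h0 : W.eval 0 = 0 := by rw [hWz]; simp
  rw [hW] at h0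
  simp only [eval_add, eval_mul, eval_comp, eval_pow, eval_X, eval_C, zero_add] at h0
  rw [zero_pow he.ne', zero_pow (Nat.mul_ne_zero he.ne' hA0), zero_mul, add_zero,
    ← coeff_zero_eq_eval_zero, coeff_zero_reverse] at h0
  rcases mul_eq_zero.mp h0 with h1 | h1
  · rw [leadingCoeff_eq_zero] at h1
    apply hA0; rw [h1]; simp
  · exact pow_ne_zero _ ha h1

noncomputable def Lz {K : Type*} [Field K] (Q : K[X]) (z b : K) : K[X] :=
  Q.comp (C z * (X + C b))

lemma Lz_eval {K : Type*} [Field K] (Q : K[X]) (z b y : K) :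
    (Lz Q z b).eval y = Q.eval ((y + b) * z) := by
  unfold Lz; simp [mul_comm]

lemma Lz_deg {K : Type*} [Field K] (Q : K[X]) (z b : K) :
    (Lz Q z b).natDegree ≤ Q.natDegree := by
  unfold Lz
  refine natDegree_comp_le.trans ?_
  calc _ ≤ Q.natDegree * 1 := Nat.mul_le_mul_left _ (by
        refine (natDegree_C_mul_le _ _).trans ?_
        rw [natDegree_X_add_C])
    _ = _ := mul_one _

noncomputable def cf {K : Type*} [Field K] (Q : K[X]) (b : K) (j : ℕ) : K[X] :=
  ∑ n ∈ Finset.range (Q.natDegree + 1), C (Q.coeff n * ((X + C b) ^ n).coeff j) * X ^ n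

lemma cf_deg {K : Type*} [Field K] (Q : K[X]) (b : K) (j : ℕ) :
    (cf Q b j).natDegree ≤ Q.natDegree := by
  unfold cf
  apply natDegree_sum_le_of_forall_le
  intro n hn
  refine (natDegree_C_mul_X_pow_le _ _).trans ?_
  have := Finset.mem_range.mp hn
  omega

lemma cf_eval {K : Type*} [Field K] (Q : K[X]) (b z : K) (j : ℕ) :
    (cf Q b j).eval z = (Lz Q z b).coeff j := by
  unfold cf Lz
  rw [comp, eval₂_eq_sum_range, finsetSum_coeff, eval_finsetSum]
  apply Finset.sum_congr rfl
  intro n _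
  rw [mul_pow, ← C_pow, coeff_C_mul, coeff_C_mul]
  simp only [eval_mul, eval_C, eval_pow, eval_X]
  ring

lemma Lz_coeff_top {K : Type*} [Field K] (Q : K[X]) (b z : K) :
    (Lz Q z b).coeff Q.natDegree = Q.leadingCoeff * z ^ Q.natDegree := by
  rw [← cf_eval]
  unfold cf
  rw [eval_finsetSum, Finset.sum_eq_single Q.natDegree]
  · have h : ((X + C b : K[X]) ^ Q.natDegree).coeff Q.natDegree = 1 := by
      have := (monic_X_add_C b).pow Q.natDegree
      have h2 := this.coeff_natDegree
      rwa [(monic_X_add_C b).natDegree_pow, natDegree_X_add_C, mul_one] at h2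
    rw [h]; simp
  · intro n hn hne
    have hn' := Finset.mem_range.mp hn
    have h0 : ((X + C b : K[X]) ^ n).coeff Q.natDegree = 0 := by
      apply coeff_eq_zero_of_natDegree_lt
      rw [(monic_X_add_C b).natDegree_pow, natDegree_X_add_C]; omega
    rw [h0]; simp
  · simp

noncomputable def AS {K : Type*} [Field K] (k s : ℕ) (Q : K[X]) (b : K) : K[X] :=
  ∑ i ∈ Finset.range k, (cf Q b (s * 2 ^ i)) ^ (2 ^ (k - i))

lemma AS_eval {K : Type*} [Field K] (k s : ℕ) (Q : K[X]) (b z : K) :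
    (AS k s Q b).eval z = Rs k s (Lz Q z b) := by
  unfold AS Rs
  rw [eval_finsetSum]
  apply Finset.sum_congr rfl
  intro i _
  rw [eval_pow, cf_eval]

lemma AS_deg {K : Type*} [Field K] (k s : ℕ) (Q : K[X]) (b : K) :
    (AS k s Q b).natDegree ≤ Q.natDegree * 2 ^ k := by
  unfold AS
  apply natDegree_sum_le_of_forall_le
  intro i _
  refine natDegree_pow_le.trans ?_
  rw [mul_comm]
  exact Nat.mul_le_mul (cf_deg _ _ _) (Nat.pow_le_pow_right (by norm_num) (by omega))

lemma caseB (m k e : ℕ) (hm : m ≠ 0) (he : 0 < e) (Q : (GaloisField 2 m)[X])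
    (hQ0 : Q.eval 0 = 0) (htk : Q.natDegree < 2 ^ k) (hkm : 2 * k ≤ m)
    (hq : 2 * (e * (Q.natDegree * 2 ^ k)) + 2 < 2 ^ m) (a b d : GaloisField 2 m) (ha : a ≠ 0)
    (ε : ZMod 2)
    (h : ∀ x y : GaloisField 2 m, Tr m (Q.eval (y * (x⁻¹) ^ e)) +
      Tr m (Q.eval ((y + d) * (x⁻¹) ^ e)) + Tr m (Q.eval ((y + b) * ((x + a)⁻¹) ^ e)) +
      Tr m (Q.eval ((y + (b + d)) * ((x + a)⁻¹) ^ e)) = ε) :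
    ∀ y z : GaloisField 2 m,
      Tr m (Q.eval (y * z)) + Tr m (Q.eval ((y + d) * z)) = Tr m (Q.eval (d * z)) := by
  have hdeg : ∀ z b, (Lz Q z b).natDegree ≤ Q.natDegree := fun z b => Lz_deg Q z b
  have key : ∀ s, Odd s → s ≤ Q.natDegree → ∀ z, Rs k s (Lz Q z 0 + Lz Q z d) = 0 := by
    intro s hs hst
    have hA := ratR (AS k s Q 0 + AS k s Q d) (AS k s Q b + AS k s Q (b + d))
      (Q.natDegree * 2 ^ k) e he a ha
      (natDegree_add_le_of_degree_le (AS_deg _ _ _ _) (AS_deg _ _ _ _))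
      (natDegree_add_le_of_degree_le (AS_deg _ _ _ _) (AS_deg _ _ _ _))
      (by rw [cardGF m hm]; exact hq) (by
        intro x _ _
        have h1 := Rs_zero_of_const m k Q.natDegree hm htk hkm
          (Lz Q ((x⁻¹) ^ e) 0 + Lz Q ((x⁻¹) ^ e) d + Lz Q (((x + a)⁻¹) ^ e) b +
            Lz Q (((x + a)⁻¹) ^ e) (b + d))
          (natDegree_add_le_of_degree_le (natDegree_add_le_of_degree_le
            (natDegree_add_le_of_degree_le (hdeg _ _) (hdeg _ _)) (hdeg _ _)) (hdeg _ _)) ε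
          (by
            intro y
            simp only [eval_add, Lz_eval, Tr_add, add_zero]
            exact h x y) s hs hst
        simp only [Rs_add] at h1
        simp only [eval_add, AS_eval]
        linear_combination h1)
    have hconst := eq_C_of_natDegree_eq_zero hA
    have hev : ∀ z, (AS k s Q 0 + AS k s Q d).eval z = (AS k s Q 0 + AS k s Q d).eval 0 := by
      intro z
      rw [hconst, eval_C, eval_C]
    intro z
    have hz := hev z
    simp only [eval_add, AS_eval] at hz
    rw [Rs_add, hz]
    have h0 : ∀ b, Rs k s (Lz Q 0 b) = 0 := by
      intro b
      have : Lz Q 0 b = 0 := by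
        unfold Lz
        rw [C_0, zero_mul, comp_zero, hQ0, C_0]
      rw [this]
      unfold Rs
      apply Finset.sum_eq_zero
      intro i _
      simp
    rw [h0, h0, add_zero]
  intro y z
  have h1 : ∀ y, Tr m ((Lz Q z 0 + Lz Q z d).eval y) = Tr m ((Lz Q z 0 + Lz Q z d).coeff 0) := by
    intro y
    rw [Tr_red m k Q.natDegree hm htk _ (natDegree_add_le_of_degree_le (hdeg _ _) (hdeg _ _)) y]
    rw [Finset.sum_eq_zero, Tr_zero, add_zero]
    intro s hs
    simp only [Finset.mem_filter, Finset.mem_range] at hs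
    rw [key s hs.2 (by omega) z, zero_mul]
  have h2 := (h1 y).trans (h1 0).symm
  simpa [Lz_eval, Tr_add, hQ0, Tr_zero] using h2

set_option maxHeartbeats 1000000 in
lemma caseA (m k e : ℕ) (hm : m ≠ 0) (Q : (GaloisField 2 m)[X])
    (hodd : Odd Q.natDegree) (htk : Q.natDegree < 2 ^ k) (hkm : 2 * k ≤ m)
    (hq : 3 * (e * Q.natDegree) + 4 < 2 ^ m) (he : 0 < e)
    (a b c d : GaloisField 2 m) (ha : a ≠ 0) (hc : c ≠ 0) (hac : a + c ≠ 0)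
    (ε : ZMod 2)
    (h : ∀ x y : GaloisField 2 m, Tr m (Q.eval (y * (x⁻¹) ^ e)) +
      Tr m (Q.eval ((y + b) * ((x + a)⁻¹) ^ e)) + Tr m (Q.eval ((y + d) * ((x + c)⁻¹) ^ e)) +
      Tr m (Q.eval ((y + (b + d)) * ((x + (a + c))⁻¹) ^ e)) = ε) : False := by
  classical
  have hdeg : ∀ z b, (Lz Q z b).natDegree ≤ Q.natDegree := fun z b => Lz_deg Q z b
  have hQ : Q.leadingCoeff ≠ 0 := by
    rw [Ne, leadingCoeff_eq_zero]
    rintro rfl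
    simp at hodd
  set n := e * Q.natDegree with hn
  have hn0 : n ≠ 0 := Nat.mul_ne_zero he.ne' hodd.pos.ne'
  have h1 : ∀ x : GaloisField 2 m, (x⁻¹) ^ n + ((x + a)⁻¹) ^ n + ((x + c)⁻¹) ^ n +
      ((x + (a + c))⁻¹) ^ n = 0 := by
    intro x
    have h2 := coefT m k Q.natDegree hm hodd htk hkm
      (Lz Q ((x⁻¹) ^ e) 0 + Lz Q (((x + a)⁻¹) ^ e) b + Lz Q (((x + c)⁻¹) ^ e) d +
            Lz Q (((x + (a + c))⁻¹) ^ e) (b + d))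
          (natDegree_add_le_of_degree_le (natDegree_add_le_of_degree_le
            (natDegree_add_le_of_degree_le (hdeg _ _) (hdeg _ _)) (hdeg _ _)) (hdeg _ _)) ε
          (by
            intro y
            simp only [eval_add, Lz_eval, Tr_add, add_zero]
            exact h x y)
    simp only [coeff_add, Lz_coeff_top, ← mul_add, ← pow_mul] at h2
    exact (mul_eq_zero.mp h2).resolve_left hQ
  set W : (GaloisField 2 m)[X] :=
    (X + C a) ^ n * (X + C c) ^ n * (X + C (a + c)) ^ n + X ^ n *
    ((X + C c) ^ n * (X + C (a + c)) ^ n + (X + C a) ^ n * (X + C (a + c)) ^ n +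
      (X + C a) ^ n * (X + C c) ^ n) with hW
  have hWz : W = 0 := by
    apply eq_zero_of_natDegree_lt_card_of_eval_eq_zero' W (Finset.univ \ {0, -a, -c, -(a + c)})
    · intro x hx
      simp only [Finset.mem_sdiff, Finset.mem_univ, true_and, Finset.mem_insert,
        Finset.mem_singleton, not_or] at hx
      obtain ⟨x0, x1, x2, x3⟩ := hx
      have y1 : x + a ≠ 0 := fun h => x1 (eq_neg_of_add_eq_zero_left h)
      have y2 : x + c ≠ 0 := fun h => x2 (eq_neg_of_add_eq_zero_left h)
      have y3 : x + (a + c) ≠ 0 := fun h => x3 (eq_neg_of_add_eq_zero_left h)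
      have h3 := h1 x
      rw [hW]
      simp only [eval_add, eval_mul, eval_pow, eval_X, eval_C]
      simp only [inv_pow] at h3
      have z0 := mul_inv_cancel₀ (pow_ne_zero n x0)
      have z1 := mul_inv_cancel₀ (pow_ne_zero n y1)
      have z2 := mul_inv_cancel₀ (pow_ne_zero n y2)
      have z3 := mul_inv_cancel₀ (pow_ne_zero n y3)
      generalize x ^ n = p at *
      generalize (x + a) ^ n = q at *
      generalize (x + c) ^ n = r at *
      generalize (x + (a + c)) ^ n = s at *
      linear_combination p * q * r * s * h3 - q * r * s * z0 - p * r * s * z1 -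
        p * q * s * z2 - p * q * r * z3
    · have hcc := card_compl ({0, -a, -c, -(a + c)} : Finset (GaloisField 2 m))
      have hc4 : ({0, -a, -c, -(a + c)} : Finset (GaloisField 2 m)).card ≤ 4 :=
        Finset.card_le_four
      rw [cardGF m hm] at hcc
      have hXa : ∀ a : GaloisField 2 m, ((X + C a) ^ n : (GaloisField 2 m)[X]).natDegree ≤ n := by
        intro a
        refine natDegree_pow_le.trans ?_
        rw [natDegree_X_add_C]; omega
      have hXn : ((X : (GaloisField 2 m)[X]) ^ n).natDegree ≤ n := natDegree_X_pow_le n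
      have hm2 : ∀ a c : GaloisField 2 m,
          ((X + C a) ^ n * (X + C c) ^ n : (GaloisField 2 m)[X]).natDegree ≤ n + n := fun a c =>
        natDegree_mul_le.trans (add_le_add (hXa a) (hXa c))
      have : W.natDegree ≤ n + n + n := by
        apply natDegree_add_le_of_degree_le
        · exact natDegree_mul_le.trans (add_le_add (hm2 _ _) (hXa _))
        · refine (natDegree_mul_le.trans (add_le_add hXn ?_)).trans (add_assoc n n n).ge
          exact natDegree_add_le_of_degree_le (natDegree_add_le_of_degree_le (hm2 _ _) (hm2 _ _))
            (hm2 _ _)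
      omega
  have h0 : W.eval 0 = 0 := by rw [hWz]; simp
  rw [hW] at h0
  simp only [eval_add, eval_mul, eval_pow, eval_X, eval_C, zero_add] at h0
  rw [zero_pow hn0, zero_mul, add_zero] at h0
  exact mul_ne_zero (mul_ne_zero (pow_ne_zero _ ha) (pow_ne_zero _ hc)) (pow_ne_zero _ hac) h0

/-- Theorem 4.9 (second-order derivative form): for a permutation polynomial `Q` of odd
degree `t` with `Q(0) = 0` and `4et ≤ 2^{m/4} - 1`, if the auxiliary functions
`g_λ(x) = Tr(Q((1+λ)x^{-e}) + Q(x^{-e}) + Q(λx^{-e}))` are nonconstant for all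
`λ ∉ F₂`, then no second-order derivative of `f̃(x,y) = Tr(Q(y x^{-e}))` along linearly
independent directions is constant. -/
theorem gPSap_no_decomposition
    (m : ℕ) (hm : 4 ≤ m) (e : ℕ) (he : 0 < e) (hgcd : Nat.gcd e (2 ^ m - 1) = 1)
    (Q : Polynomial (GaloisField 2 m)) (hQ0 : Q.eval 0 = 0)
    (t : ℕ) (ht : Q.natDegree = t) (htodd : Odd t)
    (hQperm : Function.Bijective fun x => Q.eval x)
    (hbound : (4 * e * t : ℝ) ≤ 2 ^ ((m : ℝ) / 4) - 1)
    (hg : ∀ lam : GaloisField 2 m, lam ≠ 0 → lam ≠ 1 →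
      ¬ ∃ ε : ZMod 2, ∀ x : GaloisField 2 m,
        Tr m (Q.eval ((1 + lam) * (x⁻¹) ^ e) + Q.eval ((x⁻¹) ^ e) +
          Q.eval (lam * (x⁻¹) ^ e)) = ε)
    (f : GaloisField 2 m × GaloisField 2 m → ZMod 2)
    (hf : ∀ x y, f (x, y) = Tr m (Q.eval (y * (x⁻¹) ^ e))) :
    ∀ u v : GaloisField 2 m × GaloisField 2 m,
      LinearIndependent (ZMod 2) ![u, v] →
      ¬ ∃ ε : ZMod 2, ∀ p : GaloisField 2 m × GaloisField 2 m, D2 f u v p = ε := by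
  classical
  have hm0 : m ≠ 0 := by omega
  subst ht
  set t := Q.natDegree with htdef
  have ht1 : 1 ≤ t := htodd.pos
  -- numeric bounds
  have hpow : (4 * e * t + 1) ^ 4 ≤ 2 ^ m := by
    have h1 : ((4 * e * t : ℝ) + 1) ≤ 2 ^ ((m : ℝ) / 4) := by linarith
    have h2 : ((4 * e * t : ℝ) + 1) ^ 4 ≤ (2 ^ ((m : ℝ) / 4)) ^ 4 :=
      pow_le_pow_left₀ (by positivity) h1 4
    have h3 : ((2 : ℝ) ^ ((m : ℝ) / 4)) ^ 4 = 2 ^ m := by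
      rw [← Real.rpow_natCast, ← Real.rpow_mul (by norm_num)]
      have : (m : ℝ) / 4 * ((4 : ℕ) : ℝ) = m := by push_cast; ring
      rw [this, Real.rpow_natCast]
    rw [h3] at h2
    exact_mod_cast h2
  obtain ⟨k, htk, hk2⟩ : ∃ k, t < 2 ^ k ∧ 2 ^ k ≤ 2 * t := by
    refine ⟨Nat.log 2 t + 1, Nat.lt_pow_succ_log_self (by norm_num) t, ?_⟩
    rw [pow_succ, mul_comm]
    exact Nat.mul_le_mul_left _ (Nat.pow_log_le_self 2 (by omega))
  have het : t ≤ e * t := Nat.le_mul_of_pos_left _ he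
  have hkm : 2 * k ≤ m := by
    have h1 : 2 ^ (k * 4) ≤ 2 ^ m := by
      rw [pow_mul]
      refine le_trans (Nat.pow_le_pow_left ?_ 4) hpow
      nlinarith
    have := (Nat.pow_le_pow_iff_right (by norm_num : 1 < 2)).mp h1
    omega
  have hw : (4 * e * t + 1) ^ 2 * 25 ≤ 2 ^ m := by
    refine le_trans ?_ hpow
    have h5 : 5 ≤ 4 * e * t + 1 := by nlinarith
    have : 25 ≤ (4 * e * t + 1) ^ 2 := by nlinarith
    calc (4 * e * t + 1) ^ 2 * 25 ≤ (4 * e * t + 1) ^ 2 * (4 * e * t + 1) ^ 2 :=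
          Nat.mul_le_mul_left _ this
      _ = _ := by ring
  have hqB : 2 * (e * (t * 2 ^ k)) + 2 < 2 ^ m := by
    have h1 : e * (t * 2 ^ k) ≤ e * (t * (2 * t)) :=
      Nat.mul_le_mul_left _ (Nat.mul_le_mul_left _ hk2)
    have h2 : e * (t * (2 * t)) ≤ 2 * ((e * t) * (e * t)) := by
      calc e * (t * (2 * t)) = 2 * ((e * t) * t) := by ring
        _ ≤ _ := Nat.mul_le_mul_left _ (Nat.mul_le_mul_left _ het)
    nlinarith
  have hqA : 3 * (e * t) + 4 < 2 ^ m := by nlinarith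
  -- the power map is onto
  have hsurj : ∀ z : GaloisField 2 m, ∃ x : GaloisField 2 m, (x⁻¹) ^ e = z := by
    intro z
    by_cases hz : z = 0
    · exact ⟨0, by rw [hz, inv_zero, zero_pow he.ne']⟩
    · have hcop : (Nat.card (GaloisField 2 m)ˣ).Coprime e := by
        rw [Nat.card_units, GaloisField.card 2 m hm0, Nat.coprime_comm]
        exact hgcd
      obtain ⟨w, hw⟩ := (powCoprime hcop).surjective (Units.mk0 z hz)
      refine ⟨((w⁻¹ : (GaloisField 2 m)ˣ) : GaloisField 2 m), ?_⟩
      have h2 := congrArg (Units.val) hw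
      simpa using h2
  have hch : ∀ x : GaloisField 2 m, x + x = 0 := fun x => CharTwo.add_self_eq_zero x
  -- no `lam` gives a constant
  have hlam : ∀ (b d : GaloisField 2 m), b ≠ 0 → d ≠ 0 → b + d ≠ 0 → ∀ ε : ZMod 2,
      ¬ ∀ z, Tr m (Q.eval (b * z)) + Tr m (Q.eval (d * z)) + Tr m (Q.eval ((b + d) * z)) = ε := by
    intro b d hb hd hbd ε h
    apply hg (d / b) (div_ne_zero hd hb)
    · intro h1
      rw [div_eq_one_iff_eq hb] at h1
      apply hbd; rw [h1, hch]
    · refine ⟨ε, fun x => ?_⟩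
      rw [← h (b⁻¹ * (x⁻¹) ^ e), Tr_add, Tr_add]
      have e1 : b * (b⁻¹ * (x⁻¹) ^ e) = (x⁻¹) ^ e := by field_simp
      have e2 : d * (b⁻¹ * (x⁻¹) ^ e) = d / b * (x⁻¹) ^ e := by field_simp
      have e3 : (b + d) * (b⁻¹ * (x⁻¹) ^ e) = (1 + d / b) * (x⁻¹) ^ e := by field_simp
      rw [e1, e2, e3]; ring
  -- case B contradiction
  have hB : ∀ (a b d : GaloisField 2 m), a ≠ 0 → d ≠ 0 → ∀ ε : ZMod 2,
      ¬ ∀ x y : GaloisField 2 m, f (x, y) + f (x, y + d) + f (x + a, y + b) +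
        f (x + a, y + (b + d)) = ε := by
    intro a b d ha hd ε h
    simp only [hf] at h
    have h1 := caseB m k e hm0 he Q hQ0 htk hkm hqB a b d ha ε h
    obtain ⟨y, hy⟩ : ∃ y : GaloisField 2 m, y ∉ ({0, d} : Finset (GaloisField 2 m)) := by
      by_contra hcon
      push Not at hcon
      have h2 : Fintype.card (GaloisField 2 m) ≤ 2 := by
        rw [← Finset.card_univ]
        refine le_trans (Finset.card_le_card (fun y _ => hcon y)) Finset.card_le_two
      rw [cardGF m hm0] at h2
      omega
    simp only [Finset.mem_insert, Finset.mem_singleton, not_or] at hy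
    refine hlam y d hy.1 hd ?_ 0 (fun z => ?_)
    · intro h2
      exact hy.2 (CharTwo.add_eq_zero.mp h2)
    · rw [← h1 y z]
      generalize Tr m _ = A
      generalize Tr m _ = B
      revert A B; decide
  rintro ⟨a, b⟩ ⟨c, d⟩ hli ⟨ε, h⟩
  have hu : ¬ (a = 0 ∧ b = 0) := by
    rintro ⟨rfl, rfl⟩
    exact hli.ne_zero 0 rfl
  have hv : ¬ (c = 0 ∧ d = 0) := by
    rintro ⟨rfl, rfl⟩
    exact hli.ne_zero 1 rfl
  have huv : ¬ (a = c ∧ b = d) := by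
    rintro ⟨rfl, rfl⟩
    have := hli.injective (a₁ := 0) (a₂ := 1) rfl
    exact absurd this (by decide)
  have h' : ∀ x y : GaloisField 2 m, f (x, y) + f (x + a, y + b) + f (x + c, y + d) +
      f (x + (a + c), y + (b + d)) = ε := by
    intro x y
    have := h (x, y)
    simpa [D2, add_assoc] using this
  by_cases ha : a = 0
  · subst ha
    have hb : b ≠ 0 := fun hb => hu ⟨rfl, hb⟩
    by_cases hc : c = 0
    · subst hc
      have hd : d ≠ 0 := fun hd => hv ⟨rfl, hd⟩
      have hbd : b + d ≠ 0 := fun h2 => huv ⟨rfl, CharTwo.add_eq_zero.mp h2⟩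
      refine hlam b d hb hd hbd ε (fun z => ?_)
      obtain ⟨x, rfl⟩ := hsurj z
      have h2 := h' x 0
      simp only [hf, add_zero, zero_add, zero_mul, hQ0, Tr_zero] at h2
      exact h2
    · refine hB c d b hc hb ε (fun x y => ?_)
      have h2 := h' x y
      rw [zero_add, add_zero, add_comm b d] at h2
      exact h2
  · by_cases hc : c = 0
    · subst hc
      have hd : d ≠ 0 := fun hd => hv ⟨rfl, hd⟩
      refine hB a b d ha hd ε (fun x y => ?_)
      have h2 := h' x y
      rw [add_zero, add_zero] at h2
      rw [← h2]; ring
    · by_cases hac : a = c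
      · subst hac
        have hbd : b + d ≠ 0 := fun h2 => huv ⟨rfl, CharTwo.add_eq_zero.mp h2⟩
        refine hB a b (b + d) ha hbd ε (fun x y => ?_)
        have h2 := h' x y
        rw [hch, add_zero] at h2
        rw [← add_assoc b b d, hch b, zero_add, ← h2]; ring
      · have hac' : a + c ≠ 0 := fun h2 => hac (CharTwo.add_eq_zero.mp h2)
        simp only [hf] at h'
        exact caseA m k e hm0 Q htodd htk hkm hqA he a b c d ha hc hac' ε h'
end
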